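/- arXiv:1411.5282 — 3 statements merged into one kernel-verified Lean document; each statement's English description precedes it below -/
import Mathlib

section
/- Suppose G satisfies Condition NC for parameters f and l. Let F ⊆ V with |F| = φ ≤ f, and consider any reduced graph associated with F and an admissible choice of the sets C_i. Then there exists a vertex k ∈ V \ F such that for every vertex i ∈ V \ F there is a directed walk of length exactly n − φ from k to i in the reduced graph; equivalently, letting H be the 0–1 adjacency matrix of the reduced graph (indexed by V \ F, with H_{u i} = 1 iff (u,i) is an edge of the reduced graph), the matrix power H^{n−φ} has a row k all of whose entries are positive. -/
/-- `p` is a directed path (a nonempty list of distinct vertices, with consecutive vertices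
joined by edges of `E`) from some vertex of `W` to `x`, with at most `l` edges. -/
def IsWxPath {V : Type} (E : V → V → Prop) (l : ℕ) (W : Finset V) (x : V)
    (p : List V) : Prop :=
  p.Chain' E ∧ p.Nodup ∧ (∃ w ∈ W, p.head? = some w) ∧ p.getLast? = some x ∧
    p.length ≤ l + 1

/-- `S` is an `l`-restricted `(W,x)`-vertex cut for the edge relation `E`:
`x ∉ S` and every `(W,x)`-path of length at most `l` contains a vertex of `S`. -/
def IsCut {V : Type} (E : V → V → Prop) (l : ℕ) (W : Finset V) (x : V)
    (S : Finset V) : Prop :=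
  x ∉ S ∧ ∀ p : List V, IsWxPath E l W x p → ∃ s ∈ S, s ∈ p

/-- `A ⇒_l B`: there is `i ∈ B` with `κ_l(A, i) ≥ f + 1`, i.e. every
`l`-restricted `(A,i)`-vertex cut has at least `f + 1` vertices. -/
def ArrowL {V : Type} (E : V → V → Prop) (f l : ℕ) (A B : Finset V) : Prop :=
  ∃ i ∈ B, ∀ S : Finset V, IsCut E l A i S → f + 1 ≤ S.card

/-- Edge relation of the subgraph induced on the complement of `F`. -/
def inducedE {V : Type} (E : V → V → Prop) (F : Finset V) : V → V → Prop :=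
  fun u v => u ∉ F ∧ v ∉ F ∧ E u v

/-- `L, C, R, F` form a partition of the vertex set into four pairwise disjoint sets. -/
def IsPartition4 {V : Type} [Fintype V] [DecidableEq V] (L C R F : Finset V) : Prop :=
  L ∪ C ∪ R ∪ F = Finset.univ ∧ Disjoint L C ∧ Disjoint L R ∧ Disjoint L F ∧
    Disjoint C R ∧ Disjoint C F ∧ Disjoint R F

/-- Condition NC for parameters `f` and `l`: for every partition `L, C, R, F` of the
vertex set with `L, R` nonempty and `|F| ≤ f`, in the induced subgraph `G_F` either
`R ∪ C ⇒_l L` or `L ∪ C ⇒_l R`. -/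
def CondNC {V : Type} [Fintype V] [DecidableEq V] (E : V → V → Prop) (f l : ℕ) : Prop :=
  ∀ L C R F : Finset V, IsPartition4 L C R F → L.Nonempty → R.Nonempty → F.card ≤ f →
    ArrowL (inducedE E F) f l (R ∪ C) L ∨ ArrowL (inducedE E F) f l (L ∪ C) R

/-- There is a directed path (nonempty list of distinct vertices) of length at most `l`
from `u` to `i` in `E` all of whose vertices avoid the set `Avoid`. -/
def HasPathLe {V : Type} (E : V → V → Prop) (l : ℕ) (Avoid : Finset V) (u i : V) : Prop :=
  ∃ p : List V, p.Chain' E ∧ p.Nodup ∧ p.head? = some u ∧ p.getLast? = some i ∧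
    p.length ≤ l + 1 ∧ ∀ v ∈ p, v ∉ Avoid

/-- Edge relation of the reduced graph associated with `F` and the choice `C`:
an edge `(u, i)` (both outside `F`) whenever there is a directed path of length at most `l`
from `u` to `i` in `G` whose vertices avoid `F ∪ C i`. -/
def reducedEdge {V : Type} [DecidableEq V] (E : V → V → Prop) (l : ℕ) (F : Finset V)
    (C : V → Finset V) : V → V → Prop :=
  fun u i => u ∉ F ∧ i ∉ F ∧ HasPathLe E l (F ∪ C i) u i

/-- The choice `C` is admissible for `F`: for each `i ∉ F`, `C i ⊆ N_i^{l-} \ {i}`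
and `|C i| ≤ f`. -/
def AdmissibleC {V : Type} (E : V → V → Prop) (l f : ℕ) (F : Finset V)
    (C : V → Finset V) : Prop :=
  ∀ i, i ∉ F → (C i).card ≤ f ∧ ∀ u ∈ C i, u ≠ i ∧ HasPathLe E l ∅ u i

/-- `K` is a source component of the directed graph with vertex set `VS` and edge relation
`Rel`: a strongly connected component no vertex outside of which has a directed path to it. -/
def IsSourceComponent {V : Type} (Rel : V → V → Prop) (VS : Finset V) (K : Finset V) : Prop :=
  K.Nonempty ∧ K ⊆ VS ∧
    (∀ u ∈ K, ∀ v ∈ K, Relation.ReflTransGen Rel u v) ∧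
    (∀ v ∈ VS, v ∉ K → ∀ u ∈ K, ¬ Relation.ReflTransGen Rel v u)

/-!
Two predecessor-closed nonempty sets of a reduced graph must meet: if `A` and `B` were disjoint,
Condition NC for the partition `A, (A ∪ B ∪ F)ᶜ, B, F` would yield a vertex `i` of one of them that
cannot be separated from the complement by only `f` vertices. Since `|C i| ≤ f`, some short path
into `i` avoids `C i`, and this is a reduced edge entering the set from outside. Applied to the sets
of ancestors of two vertices, this gives a common ancestor, hence a vertex `k` from which everything
is reachable. As the reduced graph is reflexive, the set of vertices at the end of a walk of length
`m` from `k` grows with `m` and, once stationary, is everything; it is stationary after as many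
steps as there are vertices.
-/

section ReflexiveRelation

open Relation
open scoped SetRel

variable {α : Type*}

theorem isFixedPt_iterate_card [Finite α] {g : Set α → Set α} (hg : id ≤ g) (s : Set α) :
    Function.IsFixedPt g (g^[Nat.card α] s) := by
  have subset_succ (m : ℕ) : g^[m] s ⊆ g^[m + 1] s := by
    rw [Function.iterate_succ_apply']
    exact hg _
  have eq_succ {m : ℕ} (h : (g^[m] s).ncard = (g^[m + 1] s).ncard) : g^[m] s = g^[m + 1] s :=
    Set.eq_of_subset_of_ncard_le (subset_succ m) h.ge
  have ncard_stable : (g^[Nat.card α + 1] s).ncard = (g^[Nat.card α] s).ncard :=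
    Nat.stabilises_of_monotone (f := fun m ↦ (g^[m] s).ncard)
      (monotone_nat_of_le_succ fun m ↦ Set.ncard_le_ncard (subset_succ m))
      (fun m ↦ Set.ncard_le_card _)
      (fun m h ↦ by
        simpa only [Function.iterate_succ_apply'] using congrArg (fun t ↦ (g t).ncard) (eq_succ h))
      (Nat.le_succ _)
  exact (Function.iterate_succ_apply' g _ s).symm.trans (eq_succ ncard_stable.symm).symm

theorem mem_iterate_image_card_of_reflTransGen [Finite α] (R : SetRel α α) [R.IsRefl] {a b : α}
    (h : ReflTransGen (· ~[R] ·) a b) : b ∈ R.image^[Nat.card α] {a} := by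
  have image_inflationary : id ≤ R.image := fun _ u hu ↦ ⟨u, hu, R.refl u⟩
  induction h with
  | refl => exact Function.id_le_iterate_of_id_le image_inflationary _ {a} rfl
  | tail _ hcd ih =>
    rw [← isFixedPt_iterate_card image_inflationary {a}]
    exact ⟨_, ih, hcd⟩

theorem reflTransGen_subrel {r : α → α → Prop} {p : α → Prop} (hr : ∀ u v, r u v → p u)
    {a b : Subtype p} (h : ReflTransGen r a b) : ReflTransGen (Subrel r p) a b := by
  obtain ⟨a, ha⟩ := a
  change ReflTransGen r a b at h
  induction h using ReflTransGen.head_induction_on with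
  | refl => exact .refl
  | head huv hvb ih =>
    have hv : p _ := hvb.cases_head.elim (fun h ↦ h ▸ b.2) fun ⟨_, hvw, _⟩ ↦ hr _ _ hvw
    exact .head (b := ⟨_, hv⟩) ((subrel_val r p).2 huv) (ih hv)

end ReflexiveRelation

section NonnegativeMatrix

variable {α R : Type*} [Fintype α] [DecidableEq α] [Semiring R] [PartialOrder R]
  [IsStrictOrderedRing R] {H : Matrix α α R}

theorem pow_apply_pos_of_mem_iterate_image (hH : ∀ u i, 0 ≤ H u i) {m : ℕ} {k i : α}
    (hi : i ∈ (SetRel.image {p | 0 < H p.1 p.2})^[m] {k}) : 0 < (H ^ m) k i := by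
  induction m generalizing i with
  | zero =>
    obtain rfl : i = k := hi
    simp
  | succ m ih =>
    rw [Function.iterate_succ_apply'] at hi
    obtain ⟨j, hj, hji⟩ := hi
    rw [pow_succ, Matrix.mul_apply]
    exact Finset.sum_pos' (fun v _ ↦ mul_nonneg (Matrix.pow_apply_nonneg hH m k v) (hH v i))
      ⟨j, Finset.mem_univ j, mul_pos (ih hj) hji⟩

theorem pow_card_apply_pos_of_reflTransGen (hH : ∀ u i, 0 ≤ H u i) (hdiag : ∀ u, 0 < H u u)
    {k i : α} (hki : Relation.ReflTransGen (fun u v ↦ 0 < H u v) k i) :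
    0 < (H ^ Fintype.card α) k i := by
  let R : SetRel α α := {p | 0 < H p.1 p.2}
  have : R.IsRefl := ⟨hdiag⟩
  rw [← Nat.card_eq_fintype_card]
  exact pow_apply_pos_of_mem_iterate_image hH (mem_iterate_image_card_of_reflTransGen R hki)

end NonnegativeMatrix

section ReducedGraph

variable {V : Type} {E : V → V → Prop} {f l : ℕ} {A B F : Finset V}

theorem IsWxPath.notMem_of_inducedE {W : Finset V} {x : V} {p : List V}
    (hp : IsWxPath (inducedE E F) l W x p) (hW : Disjoint W F) : ∀ v ∈ p, v ∉ F := by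
  obtain ⟨hchain, -, ⟨w, hw, hhead⟩, -, -⟩ := hp
  refine hchain.induction (· ∉ F) p (fun _ _ huv _ ↦ huv.2.1) fun hne ↦ ?_
  rw [List.head_eq_iff_head?_eq_some hne |>.2 hhead]
  exact Finset.disjoint_left.1 hW hw

theorem ArrowL.add_one_lt_card [Fintype V] (h : ArrowL E f l A B) (hAB : Disjoint A B) :
    f + 1 < Fintype.card V := by
  classical
  obtain ⟨i, hiB, hmin⟩ := h
  have hcut : IsCut E l A i (Finset.univ.erase i) := by
    refine ⟨Finset.notMem_erase i _, fun p ⟨_, _, ⟨w, hwA, hhead⟩, _, _⟩ ↦ ⟨w, ?_, ?_⟩⟩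
    · exact Finset.mem_erase.2 ⟨Finset.disjoint_iff_ne.1 hAB w hwA i hiB, Finset.mem_univ w⟩
    · exact List.mem_of_head? hhead
  exact (hmin _ hcut).trans_lt (Finset.card_erase_lt_of_mem (Finset.mem_univ i))

variable [DecidableEq V] {C : V → Finset V}

theorem reducedEdge_self {i : V} (hiF : i ∉ F) (hiC : i ∉ C i) : reducedEdge E l F C i i :=
  ⟨hiF, hiF, [i], List.isChain_singleton i, by simp [hiF, hiC]⟩

theorem ArrowL.exists_reducedEdge (h : ArrowL (inducedE E F) f l A B) (hAF : Disjoint A F)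
    (hBF : Disjoint B F) (hC : ∀ i ∉ F, i ∉ C i ∧ (C i).card ≤ f) :
    ∃ u ∈ A, ∃ i ∈ B, reducedEdge E l F C u i := by
  obtain ⟨i, hiB, hmin⟩ := h
  have hiF : i ∉ F := Finset.disjoint_left.1 hBF hiB
  obtain ⟨hiC, hcard⟩ := hC i hiF
  have hnotCut : ¬ IsCut (inducedE E F) l A i (C i) := fun hcut ↦
    (hmin _ hcut).not_gt (Nat.lt_succ_of_le hcard)
  obtain ⟨p, hp, hpC⟩ : ∃ p, IsWxPath (inducedE E F) l A i p ∧ ∀ v ∈ C i, v ∉ p := by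
    simpa only [IsCut, hiC, not_false_eq_true, true_and, not_forall, not_exists, not_and,
      exists_prop] using hnotCut
  have hpF := hp.notMem_of_inducedE hAF
  obtain ⟨hchain, hnodup, ⟨w, hwA, hhead⟩, hlast, hlen⟩ := hp
  refine ⟨w, hwA, i, hiB, Finset.disjoint_left.1 hAF hwA, hiF, p, hchain.imp fun _ _ h ↦ h.2.2,
    hnodup, hhead, hlast, hlen, fun v hv ↦ ?_⟩
  exact Finset.notMem_union.2 ⟨hpF v hv, fun hvC ↦ hpC v hvC hv⟩

variable [Fintype V]

theorem CondNC.arrowL_compl (hNC : CondNC E f l) (hF : F.card ≤ f) (hA : A.Nonempty)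
    (hB : B.Nonempty) (hAB : Disjoint A B) (hAF : Disjoint A F) (hBF : Disjoint B F) :
    ArrowL (inducedE E F) f l (A ∪ F)ᶜ A ∨ ArrowL (inducedE E F) f l (B ∪ F)ᶜ B := by
  have hpart : IsPartition4 A (A ∪ B ∪ F)ᶜ B F := by
    grind [IsPartition4, Finset.disjoint_left, Finset.mem_compl]
  have hA_compl : B ∪ (A ∪ B ∪ F)ᶜ = (A ∪ F)ᶜ := by
    grind [Finset.disjoint_left, Finset.mem_compl]
  have hB_compl : A ∪ (A ∪ B ∪ F)ᶜ = (B ∪ F)ᶜ := by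
    grind [Finset.disjoint_left, Finset.mem_compl]
  simpa only [hA_compl, hB_compl] using hNC _ _ _ _ hpart hA hB hF

theorem CondNC.add_one_lt_card [Nontrivial V] (hNC : CondNC E f l) :
    f + 1 < Fintype.card V := by
  obtain ⟨a, b, hab⟩ := exists_pair_ne V
  have hNC' := hNC.arrowL_compl (F := ∅) (Nat.zero_le f) (Finset.singleton_nonempty a)
    (Finset.singleton_nonempty b) (Finset.disjoint_singleton.2 hab) (Finset.disjoint_empty_right _)
    (Finset.disjoint_empty_right _)
  simp only [Finset.union_empty] at hNC'
  exact hNC'.elim (·.add_one_lt_card disjoint_compl_left) (·.add_one_lt_card disjoint_compl_left)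

theorem CondNC.not_disjoint_of_predecessor_closed (hNC : CondNC E f l) (hF : F.card ≤ f)
    (hC : ∀ i ∉ F, i ∉ C i ∧ (C i).card ≤ f) (hA : A.Nonempty) (hB : B.Nonempty)
    (hAF : Disjoint A F) (hBF : Disjoint B F)
    (hA_closed : ∀ u, ∀ i ∈ A, reducedEdge E l F C u i → u ∈ A)
    (hB_closed : ∀ u, ∀ i ∈ B, reducedEdge E l F C u i → u ∈ B) : ¬ Disjoint A B := by
  have not_arrowL {D : Finset V} (hDF : Disjoint D F)
      (hD_closed : ∀ u, ∀ i ∈ D, reducedEdge E l F C u i → u ∈ D) :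
      ¬ ArrowL (inducedE E F) f l (D ∪ F)ᶜ D := fun h ↦ by
    obtain ⟨u, hu, i, hi, hui⟩ := h.exists_reducedEdge
      (disjoint_compl_left.mono_right Finset.subset_union_right) hDF hC
    exact Finset.mem_compl.1 hu (Finset.mem_union_left F (hD_closed u i hi hui))
  exact fun hAB ↦ (hNC.arrowL_compl hF hA hB hAB hAF hBF).elim (not_arrowL hAF hA_closed)
    (not_arrowL hBF hB_closed)

open Relation

theorem CondNC.exists_common_ancestor (hNC : CondNC E f l) (hF : F.card ≤ f)
    (hC : ∀ i ∉ F, i ∉ C i ∧ (C i).card ≤ f) {a b : V} (ha : a ∉ F) (hb : b ∉ F) :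
    ∃ c ∉ F, ReflTransGen (reducedEdge E l F C) c a ∧ ReflTransGen (reducedEdge E l F C) c b := by
  classical
  let ancestors (v : V) : Finset V := {u | ReflTransGen (reducedEdge E l F C) u v}
  have mem_ancestors {u v : V} :
      u ∈ ancestors v ↔ ReflTransGen (reducedEdge E l F C) u v := by simp [ancestors]
  have self_mem (v : V) : v ∈ ancestors v := mem_ancestors.2 .refl
  have ancestors_disjoint {v : V} (hv : v ∉ F) : Disjoint (ancestors v) F := by
    refine Finset.disjoint_left.2 fun u hu ↦ ?_
    obtain rfl | ⟨w, huw, -⟩ := (mem_ancestors.1 hu).cases_head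
    exacts [hv, huw.1]
  have ancestors_closed (v u i : V) (hi : i ∈ ancestors v) (hui : reducedEdge E l F C u i) :
      u ∈ ancestors v := mem_ancestors.2 (.head hui (mem_ancestors.1 hi))
  obtain ⟨c, hca, hcb⟩ := Finset.not_disjoint_iff.1 <|
    hNC.not_disjoint_of_predecessor_closed hF hC ⟨a, self_mem a⟩ ⟨b, self_mem b⟩
      (ancestors_disjoint ha) (ancestors_disjoint hb) (ancestors_closed a) (ancestors_closed b)
  exact ⟨c, Finset.disjoint_left.1 (ancestors_disjoint ha) hca, mem_ancestors.1 hca,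
    mem_ancestors.1 hcb⟩

theorem CondNC.exists_root [Nontrivial V] (hNC : CondNC E f l) (hF : F.card ≤ f)
    (hC : ∀ i ∉ F, i ∉ C i ∧ (C i).card ≤ f) :
    ∃ k : {v // v ∉ F}, ∀ i, ReflTransGen (Subrel (reducedEdge E l F C) (· ∉ F)) k i := by
  obtain ⟨v, hv⟩ : ∃ v, v ∉ F := by
    by_contra! hall
    have := hNC.add_one_lt_card
    rw [Finset.eq_univ_of_forall hall, Finset.card_univ] at hF
    lia
  have : Nonempty {v // v ∉ F} := ⟨v, hv⟩
  have hdirected : Directed (fun i c ↦ ReflTransGen (reducedEdge E l F C) c i)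
      (Subtype.val : {v // v ∉ F} → V) := fun a b ↦ by
    obtain ⟨c, hcF, hca, hcb⟩ := hNC.exists_common_ancestor hF hC a.2 b.2
    exact ⟨⟨c, hcF⟩, hca, hcb⟩
  have : IsTrans V fun i c ↦ ReflTransGen (reducedEdge E l F C) c i :=
    ⟨fun _ _ _ hba hcb ↦ hcb.trans hba⟩
  obtain ⟨k, hk⟩ := hdirected.finite_le id
  exact ⟨k, fun i ↦ reflTransGen_subrel (fun _ _ h ↦ h.1) (hk i)⟩

theorem stmt_5_general [Nontrivial V] {R : Type*} [Semiring R] [PartialOrder R]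
    [IsStrictOrderedRing R] (hNC : CondNC E f l) (hF : F.card ≤ f)
    (hC : ∀ i ∉ F, i ∉ C i ∧ (C i).card ≤ f) (H : Matrix {v // v ∉ F} {v // v ∉ F} R)
    (hH_nonneg : ∀ u i, 0 ≤ H u i) (hH_pos : ∀ u i, reducedEdge E l F C u.1 i.1 → 0 < H u i) :
    ∃ k, ∀ i, 0 < (H ^ (Fintype.card V - F.card)) k i := by
  obtain ⟨k, hk⟩ := hNC.exists_root hF hC
  have hdiag (u : {v // v ∉ F}) : 0 < H u u :=
    hH_pos u u (reducedEdge_self u.2 (hC u u.2).1)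
  have hcard : Fintype.card {v // v ∉ F} = Fintype.card V - F.card := by
    rw [Fintype.card_subtype_compl, Fintype.card_coe]
  rw [← hcard]
  exact ⟨k, fun i ↦ pow_card_apply_pos_of_reflTransGen hH_nonneg hdiag (.mono hH_pos _ _ (hk i))⟩

end ReducedGraph

/-- If `G` satisfies Condition NC, `F ⊆ V` with `|F| = φ ≤ f`, and `H` is the 0–1 adjacency
matrix (indexed by `V \ F`) of a reduced graph associated with `F` and an admissible choice
of sets `C_i`, then `H ^ (n - φ)` has a row `k` all of whose entries are positive. -/
theorem stmt_5 {V : Type} [Fintype V] [DecidableEq V] (E : V → V → Prop)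
    (hself : ∀ v, E v v) (hn : 2 ≤ Fintype.card V) (f l : ℕ) (hl : 1 ≤ l)
    (hNC : CondNC E f l)
    (F : Finset V) (hF : F.card ≤ f) (C : V → Finset V) (hC : AdmissibleC E l f F C)
    (H : Matrix {v : V // v ∉ F} {v : V // v ∉ F} ℝ)
    (hH1 : ∀ u i : {v : V // v ∉ F}, reducedEdge E l F C u.1 i.1 → H u i = 1)
    (hH0 : ∀ u i : {v : V // v ∉ F}, ¬ reducedEdge E l F C u.1 i.1 → H u i = 0) :
    ∃ k : {v : V // v ∉ F}, ∀ i : {v : V // v ∉ F},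
      0 < (H ^ (Fintype.card V - F.card)) k i := by
  have : Nontrivial V := Fintype.one_lt_card_iff_nontrivial.1 hn
  refine stmt_5_general hNC hF (fun i hi ↦ ⟨fun h ↦ ((hC i hi).2 i h).1 rfl, (hC i hi).1⟩) H
    (fun u i ↦ ?_) fun u i h ↦ hH1 u i h ▸ zero_lt_one
  by_cases h : reducedEdge E l F C u.1 i.1
  exacts [hH1 u i h ▸ zero_le_one, (hH0 u i h).ge]
end

section
/- Suppose f ≥ 1 and G satisfies Condition NC for parameters f and l. Then for every vertex i ∈ V and every F ⊆ V \ {i} with |F| ≤ f, in the induced subgraph G_F every l-restricted ((V \ F) \ {i}, i)-vertex cut has size at least f+1; that is, κ_l((V \ F) \ {i}, i) ≥ f+1 computed in G_F. -/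
/-!
A set `A` disjoint from `B` separates itself from `B`, so `A ⇒_l B` forces `|A| ≥ f + 1`.
Hence, for a set `L` of at most `f` vertices, Condition NC applied to the partition
`(L, ∅, V \ (L ∪ F), F)` cannot hold through `L ⇒_l V \ (L ∪ F)` and gives `V \ (L ∪ F) ⇒_l L`.
If `V \ (L ∪ F)` is empty, there is no such partition, but then `V \ L ⊆ F` has at most `f`
elements, and the partition `(L, ∅, V \ L, ∅)` contradicts Condition NC.
-/

section Cuts

variable {V : Type} {E : V → V → Prop} {f l : ℕ}

theorem isCut_self {W : Finset V} {x : V} (hx : x ∉ W) : IsCut E l W x W := by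
  refine ⟨hx, ?_⟩
  rintro p ⟨-, -, ⟨w, hw, hhead⟩, -, -⟩
  exact ⟨w, hw, List.mem_of_mem_head? hhead⟩

theorem ArrowL.lt_card {A B : Finset V} (h : ArrowL E f l A B) (hAB : Disjoint A B) :
    f < A.card := by
  obtain ⟨i, hi, hcut⟩ := h
  exact hcut A (isCut_self (Finset.disjoint_right.mp hAB hi))

theorem arrowL_singleton_right {A : Finset V} {i : V} :
    ArrowL E f l A {i} ↔ ∀ S, IsCut E l A i S → f + 1 ≤ S.card := by
  simp only [ArrowL, Finset.mem_singleton, exists_eq_left]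

end Cuts

section ConditionNC

variable {V : Type} [Fintype V] [DecidableEq V] {E : V → V → Prop} {f l : ℕ} {L F : Finset V}

theorem isPartition4_compl_sdiff {C : Finset V} (hLC : Disjoint L C) (hLF : Disjoint L F)
    (hCF : Disjoint C F) : IsPartition4 L C (Fᶜ \ (L ∪ C)) F := by
  have hdisj : Disjoint (L ∪ C) (Fᶜ \ (L ∪ C)) := Finset.disjoint_sdiff
  rw [Finset.disjoint_union_left] at hdisj
  refine ⟨?_, hLC, hdisj.1, hLF, hdisj.2, hCF, disjoint_compl_left.mono_left Finset.sdiff_subset⟩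
  ext v
  simp only [Finset.mem_union, Finset.mem_sdiff, Finset.mem_compl, Finset.mem_univ]
  tauto

theorem CondNC.arrowL_of_sdiff_nonempty (hNC : CondNC E f l) (hL : L.Nonempty)
    (hLf : L.card ≤ f) (hLF : Disjoint L F) (hF : F.card ≤ f) (hR : (Fᶜ \ L).Nonempty) :
    ArrowL (inducedE E F) f l (Fᶜ \ L) L := by
  have hpart : IsPartition4 L ∅ (Fᶜ \ L) F := by
    simpa only [Finset.union_empty] using
      isPartition4_compl_sdiff (Finset.disjoint_empty_right L) hLF (Finset.disjoint_empty_left F)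
  have hNC' := hNC L ∅ (Fᶜ \ L) F hpart hL hR hF
  simp only [Finset.union_empty] at hNC'
  exact hNC'.resolve_right fun h => (h.lt_card Finset.disjoint_sdiff).not_ge hLf

theorem stmt_7_general (hNC : CondNC E f l) (hL : L.Nonempty) (hL' : L ≠ Finset.univ)
    (hLf : L.card ≤ f) (hLF : Disjoint L F) (hF : F.card ≤ f) :
    ArrowL (inducedE E F) f l (Fᶜ \ L) L := by
  refine hNC.arrowL_of_sdiff_nonempty hL hLf hLF hF (Finset.nonempty_iff_ne_empty.mpr fun hR => ?_)
  have hsub : Lᶜ ⊆ F := compl_le_of_compl_le (Finset.sdiff_eq_empty_iff_subset.mp hR)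
  have harrow : ArrowL (inducedE E ∅) f l Lᶜ L := by
    simpa only [Finset.compl_empty, ← Finset.compl_eq_univ_sdiff] using
      hNC.arrowL_of_sdiff_nonempty hL hLf (Finset.disjoint_empty_right L) (Nat.zero_le f)
        (by simpa [← Finset.compl_eq_univ_sdiff, Finset.nonempty_iff_ne_empty] using hL')
  have hlt : f < Lᶜ.card := harrow.lt_card disjoint_compl_left
  exact ((Finset.card_le_card hsub).trans hF).not_gt hlt

end ConditionNC

/-- Suppose `f ≥ 1` and `G` satisfies Condition NC. Then for every vertex `i` and every
`F ⊆ V \ {i}` with `|F| ≤ f`, in the induced subgraph `G_F` every `l`-restricted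
`((V \ F) \ {i}, i)`-vertex cut has size at least `f + 1`. -/
theorem stmt_7 {V : Type} [Fintype V] [DecidableEq V] (E : V → V → Prop)
    (hself : ∀ v, E v v) (hn : 2 ≤ Fintype.card V) (f l : ℕ) (hl : 1 ≤ l)
    (hf : 1 ≤ f) (hNC : CondNC E f l) :
    ∀ i : V, ∀ F : Finset V, i ∉ F → F.card ≤ f →
      ∀ S : Finset V,
        IsCut (inducedE E F) l ((Finset.univ \ F).erase i) i S → f + 1 ≤ S.card := by
  intro i F hiF hF
  have : Nontrivial V := Fintype.one_lt_card_iff_nontrivial.mp hn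
  rw [← Finset.sdiff_singleton_eq_erase, ← Finset.compl_eq_univ_sdiff, ← arrowL_singleton_right]
  exact stmt_7_general hNC (Finset.singleton_nonempty i) (Finset.singleton_ne_univ i)
    ((Finset.card_singleton i).trans_le hf) (Finset.disjoint_singleton_left.mpr hiF) hF
end

section
/- Suppose G is symmetric, i.e., (u,v) is an edge if and only if (v,u) is an edge, and suppose l ≥ n − 1 (so the length restriction on paths is vacuous). Then G satisfies Condition NC for parameters f and l if and only if n ≥ 3f+1 and the node-connectivity of G is at least 2f+1, i.e., for every S ⊆ V with |S| ≤ 2f the subgraph of G induced on V \ S is connected. -/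
/-! Sufficiency: the sets `R ∪ C`, `L ∪ C` and `F` cover `V`, so when `n ≥ 3f + 1` and `|F| ≤ f`
one of the sources `R ∪ C` and `L ∪ C`, say `A`, has more than `f` vertices. A set `S` of at most
`f` vertices misses some `w ∈ A`, and `w` still reaches any target outside `S ∪ F` after the
deletion of `S ∪ F`, which has at most `2f` vertices; so `S` is not a cut. Enlarging the deleted set
to exactly `2f` vertices yields a path with at most `n - 2f - 1` edges.

Necessity: a source with at most `f` vertices is its own cut, so `V` cannot be split into three
parts of size at most `f`. If the deletion of `S`, with `|S| ≤ 2f`, disconnects `u` from `v`, split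
`S` into `F` and `C` of size at most `f` each and let `L` be the component of `u`: as no edge joins
`L` to the remaining vertices `R`, the set `C` is a cut in both directions. -/

section Paths

variable {V : Type*}

lemma exists_isChain_nodup_of_reflTransGen {r : V → V → Prop} {u v : V}
    (h : Relation.ReflTransGen r u v) :
    ∃ p : List V, p.IsChain r ∧ p.Nodup ∧ p.head? = some u ∧ p.getLast? = some v := by
  induction h using Relation.ReflTransGen.head_induction_on with
  | refl => exact ⟨[v], by simp⟩
  | @head a b hab _ ih =>
    obtain ⟨p, hchain, hnodup, hhead, hlast⟩ := ih
    by_cases ha : a ∈ p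
    · obtain ⟨s, t, rfl⟩ := List.append_of_mem ha
      exact ⟨a :: t, hchain.right_of_append, hnodup.of_append_right, rfl, by simpa using hlast⟩
    · refine ⟨a :: p, hchain.cons ?_, hnodup.cons ha, rfl, ?_⟩
      · simpa [hhead] using hab
      · simp [List.getLast?_cons, hlast]

/-- Adjacency in the graph obtained from `E` by deleting the vertices in `S` and all self-loops. -/
def DeleteAdj (E : V → V → Prop) (S : Finset V) (a b : V) : Prop :=
  a ∉ S ∧ b ∉ S ∧ a ≠ b ∧ E a b

/-- Vertex connectivity at least `k + 1`: deleting any `k` or fewer vertices leaves every remaining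
vertex reachable from every other. The graph with no vertex left counts as connected. -/
def ConnectedAfterDeleting (E : V → V → Prop) (k : ℕ) : Prop :=
  ∀ S : Finset V, S.card ≤ k → ∀ u v : V, u ∉ S → v ∉ S →
    Relation.ReflTransGen (DeleteAdj E S) u v

lemma forall_notMem_of_isChain_deleteAdj {E : V → V → Prop} {S : Finset V} {v : V} {p : List V}
    (hp : p.IsChain (DeleteAdj E S)) (hlast : p.getLast? = some v) (hv : v ∉ S) :
    ∀ y ∈ p, y ∉ S := by
  refine hp.backwards_induction (· ∉ S) p (fun _ _ h _ => h.1) fun hne => ?_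
  rwa [Option.some.inj ((List.getLast?_eq_some_getLast hne).symm.trans hlast)]

lemma ConnectedAfterDeleting.exists_path_avoiding [Fintype V] {E : V → V → Prop} {k : ℕ}
    (hE : ConnectedAfterDeleting E k) (hk : k + 2 ≤ Fintype.card V) {U : Finset V}
    (hU : U.card ≤ k) {u v : V} (hu : u ∉ U) (hv : v ∉ U) :
    ∃ p : List V, p.IsChain E ∧ p.Nodup ∧ p.head? = some u ∧ p.getLast? = some v ∧
      (∀ y ∈ p, y ∉ U) ∧ p.length + k ≤ Fintype.card V := by
  classical
  have hUuv : U ⊆ {u, v}ᶜ := Finset.subset_compl_iff_disjoint_right.2 (by simp [hu, hv])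
  have hkuv : k ≤ ({u, v} : Finset V)ᶜ.card := by
    have := Finset.card_le_two (a := u) (b := v)
    rw [Finset.card_compl]
    omega
  obtain ⟨T, hUT, hTuv, hT⟩ := Finset.exists_subsuperset_card_eq hUuv hU hkuv
  have huT : u ∉ T := fun h => by simpa using hTuv h
  have hvT : v ∉ T := fun h => by simpa using hTuv h
  obtain ⟨p, hchain, hnodup, hhead, hlast⟩ :=
    exists_isChain_nodup_of_reflTransGen (hE T hT.le u v huT hvT)
  have havoid := forall_notMem_of_isChain_deleteAdj hchain hlast hvT
  refine ⟨p, hchain.imp fun _ _ h => h.2.2.2, hnodup, hhead, hlast,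
    fun y hy hyU => havoid y hy (hUT hyU), ?_⟩
  have hdisj : Disjoint p.toFinset T :=
    Finset.disjoint_left.2 fun y hy => havoid y (List.mem_toFinset.1 hy)
  calc p.length + k = (p.toFinset ∪ T).card := by
        rw [Finset.card_union_of_disjoint hdisj, List.toFinset_card_of_nodup hnodup, hT]
    _ ≤ Fintype.card V := Finset.card_le_univ _

end Paths

section Cuts

variable {V : Type} {E : V → V → Prop} {f l : ℕ} {A B S : Finset V} {x : V}

lemma isCut_of_forall_edge_mem {P : Set V} (hA : ∀ a ∈ A, a ∈ P ∨ a ∈ S)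
    (hP : ∀ a b, a ∈ P → E a b → b ∉ S → b ∈ P) (hxP : x ∉ P) (hxS : x ∉ S) :
    IsCut E l A x S := by
  refine ⟨hxS, fun p ⟨hchain, _, ⟨w, hwA, hhead⟩, hlast, _⟩ => ?_⟩
  by_contra! havoid
  have hwP : w ∈ P := (hA w hwA).resolve_right fun hwS =>
    havoid w hwS (List.mem_of_mem_head? hhead)
  have hpP : ∀ y ∈ p, y ∈ P := by
    refine (List.IsChain.iff_mem.1 hchain).induction (· ∈ P) p ?_ fun hne => ?_
    · exact fun a b ⟨_, hb, hab⟩ ha => hP a b ha hab fun hbS => havoid b hbS hb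
    · rwa [Option.some.inj ((List.head?_eq_some_head hne).symm.trans hhead)]
  exact hxP (hpP x (List.mem_of_getLast? hlast))

lemma not_arrowL_of_forall_isCut (hS : S.card ≤ f) (hcut : ∀ i ∈ B, IsCut E l A i S) :
    ¬ ArrowL E f l A B :=
  fun ⟨i, hi, h⟩ => absurd (h S (hcut i hi)) (by omega)

lemma not_arrowL_of_card_le (hAB : Disjoint A B) (hA : A.card ≤ f) : ¬ ArrowL E f l A B :=
  not_arrowL_of_forall_isCut hA fun _ hi =>
    isCut_of_forall_edge_mem (P := ∅) (fun _ ha => .inr ha) (by simp) (by simp)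
      (Finset.disjoint_right.1 hAB hi)

lemma ConnectedAfterDeleting.arrowL_inducedE [Fintype V] {k : ℕ} {F : Finset V}
    (hE : ConnectedAfterDeleting E k) (hk : k + 2 ≤ Fintype.card V)
    (hl : Fintype.card V ≤ l + k + 1) (hF : F.card + f ≤ k) (hAF : Disjoint A F)
    (hBF : Disjoint B F) (hA : f < A.card) (hB : B.Nonempty) :
    ArrowL (inducedE E F) f l A B := by
  classical
  obtain ⟨i, hi⟩ := hB
  refine ⟨i, hi, fun S ⟨hiS, hcut⟩ => ?_⟩
  by_contra! hS
  obtain ⟨w, hwA, hwS⟩ : ∃ w ∈ A, w ∉ S := Finset.exists_mem_notMem_of_card_lt_card (by omega)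
  have hcard : (S ∪ F).card ≤ k := (Finset.card_union_le S F).trans (by omega)
  have hwSF : w ∉ S ∪ F := Finset.notMem_union.2 ⟨hwS, Finset.disjoint_left.1 hAF hwA⟩
  have hiSF : i ∉ S ∪ F := Finset.notMem_union.2 ⟨hiS, Finset.disjoint_left.1 hBF hi⟩
  obtain ⟨p, hchain, hnodup, hhead, hlast, havoid, hlen⟩ :=
    hE.exists_path_avoiding hk hcard hwSF hiSF
  simp only [Finset.notMem_union] at havoid
  have hchainF : p.IsChain (inducedE E F) := (List.IsChain.iff_mem.1 hchain).imp
    fun a b ⟨ha, hb, hab⟩ => ⟨(havoid a ha).2, (havoid b hb).2, hab⟩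
  obtain ⟨s, hsS, hsp⟩ := hcut p ⟨hchainF, hnodup, ⟨w, hwA, hhead⟩, hlast, by omega⟩
  exact (havoid s hsp).1 hsS

end Cuts

section ConditionNC

variable {V : Type} [Fintype V] [DecidableEq V] {E : V → V → Prop} {f l : ℕ} {L C R F : Finset V}

lemma isPartition4_compl (hLC : Disjoint L C) (hLF : Disjoint L F) (hCF : Disjoint C F) :
    IsPartition4 L C (L ∪ C ∪ F)ᶜ F := by
  simp only [IsPartition4, Finset.disjoint_left, Finset.ext_iff, Finset.mem_union,
    Finset.mem_compl, Finset.mem_univ] at hLC hLF hCF ⊢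
  grind

lemma IsPartition4.exists_edge_of_arrowL (h : IsPartition4 L C R F) (hC : C.card ≤ f)
    (harrow : ArrowL (inducedE E F) f l (R ∪ C) L) : ∃ a ∈ R, ∃ b ∈ L, E a b := by
  obtain ⟨hcover, hLC, hLR, -⟩ := h
  by_contra! hRL
  refine not_arrowL_of_forall_isCut hC (fun i hi => ?_) harrow
  refine isCut_of_forall_edge_mem (P := R) (fun a => Finset.mem_union.1) ?_
    (Finset.disjoint_left.1 hLR hi) (Finset.disjoint_left.1 hLC hi)
  intro a b haR ⟨_, hbF, hab⟩ hbC
  have hbL : b ∉ L := fun hbL => hRL a haR b hbL hab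
  have hb : b ∈ L ∪ C ∪ R ∪ F := hcover ▸ Finset.mem_univ b
  simpa [hbL, hbC, hbF] using hb

lemma IsPartition4.symm (h : IsPartition4 L C R F) : IsPartition4 R C L F := by
  obtain ⟨hcover, hLC, hLR, hLF, hCR, hCF, hRF⟩ := h
  refine ⟨?_, hCR.symm, hLR.symm, hRF, hLC.symm, hCF, hLF⟩
  rw [← hcover, Finset.union_right_comm R, Finset.union_comm R, Finset.union_right_comm L]

lemma CondNC.exists_edge (hNC : CondNC E f l) (h : IsPartition4 L C R F) (hL : L.Nonempty)
    (hR : R.Nonempty) (hF : F.card ≤ f) (hC : C.card ≤ f) :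
    (∃ a ∈ R, ∃ b ∈ L, E a b) ∨ ∃ a ∈ L, ∃ b ∈ R, E a b :=
  (hNC L C R F h hL hR hF).imp (h.exists_edge_of_arrowL hC) (h.symm.exists_edge_of_arrowL hC)

lemma exists_isPartition4_card_le (hn : 2 ≤ Fintype.card V) (hf : Fintype.card V ≤ 3 * f) :
    ∃ L R F : Finset V, IsPartition4 L ∅ R F ∧ L.Nonempty ∧ R.Nonempty ∧
      L.card ≤ f ∧ R.card ≤ f ∧ F.card ≤ f := by
  obtain ⟨F, -, hF⟩ := Finset.exists_subset_card_eq (s := (Finset.univ : Finset V))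
    (n := min f (Fintype.card V - 2)) (by rw [Finset.card_univ]; omega)
  have hFc := Finset.card_compl F
  obtain ⟨L, hLF, hL⟩ := Finset.exists_subset_card_eq (s := Fᶜ)
    (n := min f (Fᶜ.card - 1)) (by omega)
  have hdisj : Disjoint L F := Finset.subset_compl_iff_disjoint_right.1 hLF
  have hR : (L ∪ ∅ ∪ F)ᶜ.card = Fintype.card V - (L.card + F.card) := by
    rw [Finset.union_empty, Finset.card_compl, Finset.card_union_of_disjoint hdisj]
  exact ⟨L, _, F, isPartition4_compl (Finset.disjoint_empty_right L) hdisj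
    (Finset.disjoint_empty_left F), Finset.card_pos.1 (by omega), Finset.card_pos.1 (by omega),
    by omega, by omega, by omega⟩

lemma CondNC.three_mul_lt_card (hNC : CondNC E f l) (hn : 2 ≤ Fintype.card V) :
    3 * f < Fintype.card V := by
  by_contra! hf
  obtain ⟨L, R, F, hpart, hL, hR, hLf, hRf, hFf⟩ := exists_isPartition4_card_le hn hf
  have hLR : Disjoint L R := hpart.2.2.1
  rcases hNC L ∅ R F hpart hL hR hFf with h | h <;> rw [Finset.union_empty] at h
  · exact not_arrowL_of_card_le hLR.symm hRf h
  · exact not_arrowL_of_card_le hLR hLf h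

lemma CondNC.connectedAfterDeleting (hNC : CondNC E f l) (hsym : ∀ u v, E u v ↔ E v u) :
    ConnectedAfterDeleting E (2 * f) := by
  classical
  intro S hS u v hu hv
  by_contra hunreachable
  obtain ⟨F, hFS, hF⟩ := Finset.exists_subset_card_eq (min_le_right f S.card)
  have hC : (S \ F).card = S.card - F.card := Finset.card_sdiff_of_subset hFS
  let L : Finset V := {a | a ∉ S ∧ Relation.ReflTransGen (DeleteAdj E S) u a}
  have hLmem : ∀ a, a ∈ L ↔ a ∉ S ∧ Relation.ReflTransGen (DeleteAdj E S) u a := by simp [L]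
  have hLS : Disjoint L S := Finset.disjoint_left.2 fun a ha => ((hLmem a).1 ha).1
  have hRmem : ∀ b, b ∈ (L ∪ (S \ F) ∪ F)ᶜ ↔ b ∉ L ∧ b ∉ S := by
    simp [Finset.union_assoc, Finset.sdiff_union_of_subset hFS]
  have hedge : ∃ a ∈ L, ∃ b ∈ (L ∪ (S \ F) ∪ F)ᶜ, E a b := by
    have hpart : IsPartition4 L (S \ F) (L ∪ (S \ F) ∪ F)ᶜ F := isPartition4_compl
      (hLS.mono_right Finset.sdiff_subset) (hLS.mono_right hFS) Finset.sdiff_disjoint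
    rcases hNC.exists_edge hpart ⟨u, (hLmem u).2 ⟨hu, .refl⟩⟩
      ⟨v, (hRmem v).2 ⟨fun hvL => hunreachable ((hLmem v).1 hvL).2, hv⟩⟩
      (by omega) (by omega) with ⟨b, hb, a, ha, hba⟩ | h
    · exact ⟨a, ha, b, hb, (hsym b a).1 hba⟩
    · exact h
  obtain ⟨a, haL, b, hbR, hab⟩ := hedge
  obtain ⟨hbL, hbS⟩ := (hRmem b).1 hbR
  obtain ⟨haS, hua⟩ := (hLmem a).1 haL
  exact hbL ((hLmem b).2 ⟨hbS, hua.tail ⟨haS, hbS, ne_of_mem_of_not_mem haL hbL, hab⟩⟩)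

lemma IsPartition4.lt_card_union_or_lt_card_union (h : IsPartition4 L C R F)
    (hn : 3 * f < Fintype.card V) (hF : F.card ≤ f) : f < (R ∪ C).card ∨ f < (L ∪ C).card := by
  have hcover : R ∪ C ∪ (L ∪ C) ∪ F = Finset.univ := by rw [← h.1]; grind
  have hcard : Fintype.card V ≤ (R ∪ C).card + (L ∪ C).card + F.card := by
    rw [← Finset.card_univ, ← hcover]
    exact (Finset.card_union_le _ _).trans (Nat.add_le_add_right (Finset.card_union_le _ _) _)
  omega

lemma ConnectedAfterDeleting.condNC (hE : ConnectedAfterDeleting E (2 * f))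
    (hn : 2 ≤ Fintype.card V) (hf : 3 * f < Fintype.card V)
    (hl : Fintype.card V ≤ l + 2 * f + 1) : CondNC E f l := by
  intro L C R F hpart hL hR hF
  have ⟨_, _, _, hLF, _, hCF, hRF⟩ := hpart
  refine (hpart.lt_card_union_or_lt_card_union hf hF).imp (fun hA => ?_) (fun hA => ?_)
  · exact hE.arrowL_inducedE (by omega) hl (by omega) (Finset.disjoint_union_left.2 ⟨hRF, hCF⟩)
      hLF hA hL
  · exact hE.arrowL_inducedE (by omega) hl (by omega) (Finset.disjoint_union_left.2 ⟨hLF, hCF⟩)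
      hRF hA hR

end ConditionNC

theorem stmt_8_general {V : Type} [Fintype V] [DecidableEq V] (E : V → V → Prop)
    (hn : 2 ≤ Fintype.card V) (f l : ℕ) (hsym : ∀ u v, E u v ↔ E v u)
    (hl : Fintype.card V ≤ l + 2 * f + 1) :
    CondNC E f l ↔ 3 * f + 1 ≤ Fintype.card V ∧ ConnectedAfterDeleting E (2 * f) :=
  ⟨fun hNC => ⟨hNC.three_mul_lt_card hn, hNC.connectedAfterDeleting hsym⟩,
    fun ⟨hf, hE⟩ => hE.condNC hn hf hl⟩

/-- For a symmetric graph `G` and `l ≥ n - 1`, Condition NC holds for parameters `f, l` iff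
`n ≥ 3f + 1` and the node-connectivity of `G` is at least `2f + 1` (for every `S` with
`|S| ≤ 2f`, the subgraph induced on `V \ S` — with self-loops ignored — is connected). -/
theorem stmt_8 {V : Type} [Fintype V] [DecidableEq V] (E : V → V → Prop)
    (hself : ∀ v, E v v) (hn : 2 ≤ Fintype.card V) (f l : ℕ) (hl : 1 ≤ l)
    (hsym : ∀ u v, E u v ↔ E v u) (hl' : Fintype.card V - 1 ≤ l) :
    CondNC E f l ↔
      (3 * f + 1 ≤ Fintype.card V ∧
        ∀ S : Finset V, S.card ≤ 2 * f →
          ∀ u v : V, u ∉ S → v ∉ S →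
            Relation.ReflTransGen (fun a b => a ∉ S ∧ b ∉ S ∧ a ≠ b ∧ E a b) u v) :=
  stmt_8_general E hn f l hsym (by omega)
end
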